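/- Let α ∈ (1,2) and A = 2 sin(πα/2) Γ(α−1). For all η₁, η₂, η₃ ∈ ℝ, the absolutely convergent integral T₁(η₁,η₂,η₃) = ∫_ℝ (1 − e^{iη₁ζ})(1 − e^{iη₂ζ})(1 − e^{iη₃ζ}) ζ^{−3} |ζ|^{α−1} sgn(ζ) dζ equals (A / ((2−α)(3−α))) ( |η₁|^{3−α} + |η₂|^{3−α} + |η₃|^{3−α} + |η₁+η₂+η₃|^{3−α} − |η₁+η₂|^{3−α} − |η₁+η₃|^{3−α} − |η₂+η₃|^{3−α} ). -/

import Mathlib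

/-!
The weight `|ζ|^{α-1} sgn ζ / ζ³` equals the even function `|ζ|^{α-4}`, so only the even part of
the product `∏ (1 - e^{iηⱼζ})` contributes. Expanding the product, that even part is
`∑ⱼ (1 - cos ηⱼζ) - ∑_{j<k} (1 - cos (ηⱼ+ηₖ)ζ) + (1 - cos (η₁+η₂+η₃)ζ)`, because the constant terms
cancel. With `β = 3 - α ∈ (1,2)`, everything therefore follows from the classical formula
`∫_ℝ (1 - cos sζ) |ζ|^{-1-β} dζ = |s|^β π / (Γ(1+β) sin (πβ/2))` (`integral_cosKernel`).

By scaling and parity it is enough to take `s = 1` on the half-line. There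
(`lintegral_one_sub_cos_mul_rpow`) one writes `Γ(1+β) x^{-1-β} = ∫ t^β e^{-xt} dt` and applies
Tonelli, using the Laplace transform `∫ (1 - cos x) e^{-xt} dx = 1/(t(1+t²))`. The remaining integral
`∫ t^{β-1}/(1+t²) dt` is computed by a second use of Tonelli, from `1/(1+t²) = ∫ e^{-u(1+t²)} du`, and
equals `Γ(β/2) Γ(1-β/2) / 2`, which Euler's reflection formula evaluates; a second use of the
reflection formula puts the constant in the required form.

Absolute convergence comes from `|1 - e^{ia}|² = 2 (1 - cos a)`: the product is bounded by
`2 (1 - cos η₁ζ) + 2 (1 - cos η₂ζ)`, whose weighted integrals are finite.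
-/

open MeasureTheory Real

noncomputable section

open Set Filter Topology

/-- A nonzero Bochner integral forces integrability, so a nonnegative function with nonzero integral
`c` over `s` has lower integral `c`; `k` is a constant factor that may vanish. -/
lemma lintegral_ofReal_const_mul {s : Set ℝ} (hs : MeasurableSet s) {f : ℝ → ℝ} {c k : ℝ}
    (hk : 0 ≤ k) (hf : ∀ x ∈ s, 0 ≤ f x) (h : ∫ x in s, f x = c) (hc : c ≠ 0) :
    ∫⁻ x in s, ENNReal.ofReal (k * f x) = ENNReal.ofReal (k * c) := by
  have hi : IntegrableOn f s := Integrable.of_integral_ne_zero (by rw [h]; exact hc)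
  rw [← h, ← integral_const_mul]
  refine (ofReal_integral_eq_lintegral_ofReal (hi.const_mul k) ?_).symm
  exact (ae_restrict_iff' hs).2 (ae_of_all _ fun x hx => mul_nonneg hk (hf x hx))

lemma integral_one_sub_cos_mul_exp {t : ℝ} (ht : 0 < t) :
    ∫ x in Ioi (0 : ℝ), (1 - cos x) * exp (-(x * t)) = 1 / (t * (1 + t ^ 2)) := by
  have ht2 : (1 + t ^ 2) ≠ 0 := by positivity
  have hexp : ∀ x : ℝ, HasDerivAt (fun x : ℝ => exp (-(x * t))) (exp (-(x * t)) * (-(1 * t))) x :=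
    fun x => ((hasDerivAt_id x).mul_const t).neg.exp
  have hd : ∀ x ∈ Ici (0 : ℝ), HasDerivAt
      (fun x => exp (-(x * t)) * (-1 / t - (sin x - t * cos x) / (1 + t ^ 2)))
      ((1 - cos x) * exp (-(x * t))) x := by
    intro x _
    have h2 := (((hasDerivAt_sin x).sub ((hasDerivAt_cos x).const_mul t)).div_const
      (1 + t ^ 2)).const_sub (-1 / t)
    refine ((hexp x).mul h2).congr_deriv ?_
    simp only [Pi.sub_apply]
    field_simp
    ring
  have hlim : Tendsto (fun x => exp (-(x * t)) * (-1 / t - (sin x - t * cos x) / (1 + t ^ 2)))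
      atTop (𝓝 0) := by
    have h0 : Tendsto (fun x : ℝ => exp (-(x * t))) atTop (𝓝 0) :=
      tendsto_exp_neg_atTop_nhds_zero.comp (tendsto_id.atTop_mul_const ht)
    refine h0.zero_mul_isBoundedUnder_le ?_
    refine isBoundedUnder_of ⟨1 / t + (1 + t) / (1 + t ^ 2), fun x => ?_⟩
    simp only [Function.comp, norm_eq_abs]
    refine (abs_sub _ _).trans (add_le_add ?_ ?_)
    · rw [abs_div, abs_neg, abs_one, abs_of_pos ht]
    · rw [abs_div, abs_of_pos (by positivity : 0 < 1 + t ^ 2)]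
      gcongr
      refine (abs_sub _ _).trans (add_le_add (abs_sin_le_one x) ?_)
      rw [abs_mul, abs_of_pos ht]
      nlinarith [abs_cos_le_one x]
  rw [integral_Ioi_of_hasDerivAt_of_nonneg' hd (fun x _ => ?_) hlim]
  · simp
    field_simp
    ring
  · exact mul_nonneg (by linarith [cos_le_one x]) (exp_pos _).le

lemma lintegral_rpow_div_one_add_sq {β : ℝ} (h0 : 0 < β) (h2 : β < 2) :
    ∫⁻ t in Ioi (0 : ℝ), ENNReal.ofReal (t ^ (β - 1) / (1 + t ^ 2))
      = ENNReal.ofReal (Gamma (β / 2) * Gamma (1 - β / 2) / 2) := by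
  have hG := Gamma_pos_of_pos (show 0 < β / 2 by linarith)
  have hG' := Gamma_pos_of_pos (show 0 < 1 - β / 2 by linarith)
  calc ∫⁻ t in Ioi (0 : ℝ), ENNReal.ofReal (t ^ (β - 1) / (1 + t ^ 2))
      = ∫⁻ t in Ioi (0 : ℝ), ∫⁻ u in Ioi (0 : ℝ),
          ENNReal.ofReal (t ^ (β - 1) * exp (-(1 + t ^ 2) * u)) := by
        refine setLIntegral_congr_fun measurableSet_Ioi fun t ht => ?_
        have ht : 0 < t := ht
        have hp : 0 < 1 + t ^ 2 := by positivity
        have := integral_exp_mul_Ioi (a := -(1 + t ^ 2)) (by linarith) 0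
        rw [mul_zero, exp_zero, neg_div_neg_eq] at this
        rw [lintegral_ofReal_const_mul measurableSet_Ioi (by positivity)
          (fun u _ => (exp_pos _).le) this (by positivity)]
        rw [mul_one_div]
    _ = ∫⁻ u in Ioi (0 : ℝ), ∫⁻ t in Ioi (0 : ℝ),
          ENNReal.ofReal (t ^ (β - 1) * exp (-(1 + t ^ 2) * u)) := by
        refine lintegral_lintegral_swap (Measurable.aemeasurable ?_)
        fun_prop
    _ = ∫⁻ u in Ioi (0 : ℝ), ENNReal.ofReal
          (Gamma (β / 2) / 2 * (u ^ (1 - β / 2 - 1) * exp (-(1 * u)))) := by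
        refine setLIntegral_congr_fun measurableSet_Ioi fun u hu => ?_
        have hu : 0 < u := hu
        have := integral_rpow_mul_exp_neg_mul_rpow (p := 2) (q := β - 1) (b := u) two_pos
          (by linarith) hu
        have h3 := lintegral_ofReal_const_mul (k := exp (-u)) measurableSet_Ioi (exp_pos _).le
          (fun t ht => mul_nonneg (rpow_nonneg (le_of_lt ht) _) (exp_pos _).le) this
          (by rw [sub_add_cancel]; positivity)
        convert h3 using 1
        · refine lintegral_congr fun t => ?_
          rw [mul_left_comm, ← exp_add, rpow_two]
          ring_nf
        · congr 1
          ring_nf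
    _ = _ := by
        have := integral_rpow_mul_exp_neg_mul_Ioi (a := 1 - β / 2) (r := 1) (by linarith) one_pos
        rw [lintegral_ofReal_const_mul measurableSet_Ioi (by positivity)
          (fun u hu => mul_nonneg (rpow_nonneg (le_of_lt hu) _) (exp_pos _).le) this
          (by positivity)]
        simp
        ring_nf

lemma lintegral_one_sub_cos_mul_rpow {β : ℝ} (h0 : 0 < β) (h2 : β < 2) :
    ∫⁻ x in Ioi (0 : ℝ), ENNReal.ofReal ((1 - cos x) * x ^ (-1 - β))
      = ENNReal.ofReal (π / (2 * Gamma (1 + β) * sin (π * β / 2))) := by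
  have hG := Gamma_pos_of_pos (show 0 < 1 + β by linarith)
  have hcos : ∀ x, 0 ≤ 1 - cos x := fun x => by linarith [cos_le_one x]
  calc ∫⁻ x in Ioi (0 : ℝ), ENNReal.ofReal ((1 - cos x) * x ^ (-1 - β))
      = ∫⁻ x in Ioi (0 : ℝ), ∫⁻ t in Ioi (0 : ℝ), ENNReal.ofReal
          ((1 - cos x) / Gamma (1 + β) * (t ^ (1 + β - 1) * exp (-(x * t)))) := by
        refine setLIntegral_congr_fun measurableSet_Ioi fun x hx => ?_
        have hx : 0 < x := hx
        rw [lintegral_ofReal_const_mul measurableSet_Ioi (div_nonneg (hcos x) hG.le)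
          (fun t ht => mul_nonneg (rpow_nonneg (le_of_lt ht) _) (exp_pos _).le)
          (integral_rpow_mul_exp_neg_mul_Ioi (a := 1 + β) (by linarith) hx) (by positivity)]
        congr 1
        rw [one_div, inv_rpow hx.le, ← rpow_neg hx.le, neg_add']
        field_simp
    _ = ∫⁻ t in Ioi (0 : ℝ), ∫⁻ x in Ioi (0 : ℝ), ENNReal.ofReal
          ((1 - cos x) / Gamma (1 + β) * (t ^ (1 + β - 1) * exp (-(x * t)))) := by
        refine lintegral_lintegral_swap (Measurable.aemeasurable ?_)
        fun_prop
    _ = ∫⁻ t in Ioi (0 : ℝ), ENNReal.ofReal (1 / Gamma (1 + β)) *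
          ENNReal.ofReal (t ^ (β - 1) / (1 + t ^ 2)) := by
        refine setLIntegral_congr_fun measurableSet_Ioi fun t ht => ?_
        have ht : 0 < t := ht
        have h3 := lintegral_ofReal_const_mul (k := t ^ β / Gamma (1 + β)) measurableSet_Ioi
          (by positivity) (fun x _ => mul_nonneg (hcos x) (exp_pos _).le)
          (integral_one_sub_cos_mul_exp ht) (by positivity)
        rw [← ENNReal.ofReal_mul (by positivity)]
        convert h3 using 1
        · refine lintegral_congr fun x => ?_
          rw [add_sub_cancel_left]
          ring_nf
        · congr 1
          rw [rpow_sub_one ht.ne']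
          field_simp
    _ = _ := by
        rw [lintegral_const_mul _ (by fun_prop), lintegral_rpow_div_one_add_sq h0 h2,
          ← ENNReal.ofReal_mul (by positivity), Gamma_mul_Gamma_one_sub,
          show π * (β / 2) = π * β / 2 by ring]
        congr 1
        field_simp

/-- The kernel `(1 - cos sζ) |ζ|^{-1-β}`. -/
def cosKernel (β s ζ : ℝ) : ℝ := (1 - cos (s * ζ)) * |ζ| ^ (-1 - β)

lemma integral_cosKernel {β : ℝ} (h0 : 0 < β) (h2 : β < 2) (s : ℝ) :
    Integrable (cosKernel β s) ∧
    ∫ ζ, cosKernel β s ζ = π / (Gamma (1 + β) * sin (π * β / 2)) * |s| ^ β := by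
  have hG := Gamma_pos_of_pos (show 0 < 1 + β by linarith)
  have hS : 0 < sin (π * β / 2) :=
    sin_pos_of_pos_of_lt_pi (by positivity) (by nlinarith [pi_pos])
  rcases eq_or_ne s 0 with rfl | hs
  · have : cosKernel β 0 = 0 := by ext; simp [cosKernel]
    rw [this]
    exact ⟨integrable_zero _ _ _, by simp [zero_rpow h0.ne']⟩
  have hs' : 0 < |s| := abs_pos.2 hs
  have hhalf : ∫ x in Ioi (0 : ℝ), (1 - cos x) * x ^ (-1 - β)
      = π / (2 * Gamma (1 + β) * sin (π * β / 2)) := by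
    rw [integral_eq_lintegral_of_nonneg_ae, lintegral_one_sub_cos_mul_rpow h0 h2,
      ENNReal.toReal_ofReal (by positivity)]
    · exact (ae_restrict_iff' measurableSet_Ioi).2 (ae_of_all _ fun x hx =>
        mul_nonneg (by linarith [cos_le_one x]) (rpow_nonneg (le_of_lt hx) _))
    · exact Measurable.aestronglyMeasurable (by fun_prop)
  have hval : ∫ ζ, cosKernel β s ζ = π / (Gamma (1 + β) * sin (π * β / 2)) * |s| ^ β := by
    have h1 : cosKernel β s = fun ζ => (fun x => (1 - cos (|s| * x)) * x ^ (-1 - β)) |ζ| := by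
      ext ζ
      simp only [cosKernel]
      rw [← abs_mul, cos_abs]
    rw [h1, integral_comp_abs]
    have h3 : ∫ x in Ioi (0 : ℝ), (1 - cos (|s| * x)) * x ^ (-1 - β)
        = ∫ x in Ioi (0 : ℝ), |s| ^ (1 + β) *
          (fun y => (1 - cos y) * y ^ (-1 - β)) (|s| * x) := by
      refine setIntegral_congr_fun measurableSet_Ioi fun x hx => ?_
      have hx : 0 < x := hx
      simp only
      rw [mul_rpow hs'.le hx.le, show -1 - β = -(1 + β) by ring, rpow_neg hs'.le]
      field_simp
    rw [h3, integral_const_mul,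
      integral_comp_mul_left_Ioi (fun y => (1 - cos y) * y ^ (-1 - β)) 0 hs', mul_zero, hhalf,
      rpow_add hs', rpow_one, smul_eq_mul]
    field_simp
  refine ⟨Integrable.of_integral_ne_zero ?_, hval⟩
  rw [hval]
  positivity

lemma cosKernel_const_eq {α : ℝ} (h1 : 1 < α) (h2 : α < 2) :
    π / (Gamma (1 + (3 - α)) * sin (π * (3 - α) / 2))
      = 2 * sin (π * α / 2) * Gamma (α - 1) / ((2 - α) * (3 - α)) := by
  have hG := Gamma_pos_of_pos (show 0 < 2 - α by linarith)
  have ha : 0 < 2 - α := by linarith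
  have hb : 0 < 3 - α := by linarith
  have hΓ : Gamma (1 + (3 - α)) = (3 - α) * ((2 - α) * Gamma (2 - α)) := by
    rw [← Gamma_add_one ha.ne', show 2 - α + 1 = 3 - α by ring, ← Gamma_add_one hb.ne', add_comm]
  have hs : sin (π * (3 - α) / 2) = -cos (π * α / 2) := by
    rw [show π * (3 - α) / 2 = π / 2 - π * α / 2 + π by ring, sin_add_pi, sin_pi_div_two_sub]
  have hc : cos (π * α / 2) < 0 :=
    cos_neg_of_pi_div_two_lt_of_lt (by nlinarith [pi_pos]) (by nlinarith [pi_pos])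
  have hs0 : 0 < sin (π * α / 2) :=
    sin_pos_of_pos_of_lt_pi (by positivity) (by nlinarith [pi_pos])
  have hr := Gamma_mul_Gamma_one_sub (α - 1)
  rw [show 1 - (α - 1) = 2 - α by ring, show π * (α - 1) = 2 * (π * α / 2) - π by ring,
    sin_sub_pi, sin_two_mul] at hr
  have hg : Gamma (α - 1) = π / -(2 * sin (π * α / 2) * cos (π * α / 2)) / Gamma (2 - α) := by
    rw [← hr]; field_simp
  rw [hΓ, hs, hg]
  have := hc.ne
  field_simp

lemma norm_one_sub_exp_sq (a ζ : ℝ) :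
    ‖1 - Complex.exp (Complex.I * a * ζ)‖ ^ 2 = 2 * (1 - cos (a * ζ)) := by
  rw [← Complex.normSq_eq_norm_sq, show Complex.I * a * ζ = ((a * ζ : ℝ) : ℂ) * Complex.I by
    push_cast; ring, Complex.exp_mul_I, ← Complex.ofReal_cos, ← Complex.ofReal_sin]
  simp only [Complex.normSq_apply, Complex.sub_re, Complex.sub_im, Complex.add_re,
    Complex.add_im, Complex.mul_re, Complex.mul_im, Complex.ofReal_re, Complex.ofReal_im,
    Complex.I_re, Complex.I_im, Complex.one_re, Complex.one_im]
  nlinarith [sin_sq_add_cos_sq (a * ζ)]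

lemma norm_one_sub_exp_le (a ζ : ℝ) : ‖1 - Complex.exp (Complex.I * a * ζ)‖ ≤ 2 := by
  have := norm_one_sub_exp_sq a ζ
  nlinarith [neg_one_le_cos (a * ζ), norm_nonneg (1 - Complex.exp (Complex.I * a * ζ))]

/-- At `ζ = 0` both sides vanish: the left one because `0 / 0 = 0`, the right one because
`0 ^ x = 0` for `x ≠ 0`. -/
lemma weight_eq {α : ℝ} (h2 : α < 2) (ζ : ℝ) :
    |ζ| ^ (α - 1) * Real.sign ζ / ζ ^ 3 = |ζ| ^ (-1 - (3 - α)) := by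
  rcases eq_or_ne ζ 0 with rfl | h
  · rw [abs_zero, zero_rpow (x := -1 - (3 - α)) (by linarith)]
    simp
  · have hp := abs_pos.2 h
    rw [show -1 - (3 - α) = (α - 1) - (3 : ℕ) by push_cast; ring, rpow_sub hp (α - 1), rpow_natCast,
      mul_div_assoc]
    rw [div_eq_mul_inv (_ ^ _) (_ ^ 3)]
    congr 1
    rcases h.lt_or_gt with h | h
    · rw [sign_of_neg h, abs_of_neg h]; field_simp
    · rw [sign_of_pos h, abs_of_pos h]; field_simp

/-- For `1 < α < 2` and `A = 2 sin(πα/2) Γ(α-1)`, the absolutely convergent integral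
`T₁(η₁,η₂,η₃) = ∫ (1-e^{iη₁ζ})(1-e^{iη₂ζ})(1-e^{iη₃ζ}) ζ^{-3} |ζ|^{α-1} sgn ζ dζ`
equals `(A/((2-α)(3-α))) (|η₁|^{3-α} + |η₂|^{3-α} + |η₃|^{3-α} + |η₁+η₂+η₃|^{3-α}
  - |η₁+η₂|^{3-α} - |η₁+η₃|^{3-α} - |η₂+η₃|^{3-α})`. -/
theorem T1_closed_form (α : ℝ) (hα1 : 1 < α) (hα2 : α < 2) (η₁ η₂ η₃ : ℝ) :
    Integrable
      (fun ζ : ℝ =>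
        (1 - Complex.exp (Complex.I * η₁ * ζ)) * (1 - Complex.exp (Complex.I * η₂ * ζ))
          * (1 - Complex.exp (Complex.I * η₃ * ζ))
          * ((|ζ| ^ (α - 1) * Real.sign ζ / ζ ^ 3 : ℝ) : ℂ)) volume ∧
    (∫ ζ : ℝ,
        (1 - Complex.exp (Complex.I * η₁ * ζ)) * (1 - Complex.exp (Complex.I * η₂ * ζ))
          * (1 - Complex.exp (Complex.I * η₃ * ζ))
          * ((|ζ| ^ (α - 1) * Real.sign ζ / ζ ^ 3 : ℝ) : ℂ))
      = (((2 * Real.sin (π * α / 2) * Real.Gamma (α - 1)) / ((2 - α) * (3 - α))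
          * (|η₁| ^ (3 - α) + |η₂| ^ (3 - α) + |η₃| ^ (3 - α) + |η₁ + η₂ + η₃| ^ (3 - α)
              - |η₁ + η₂| ^ (3 - α) - |η₁ + η₃| ^ (3 - α) - |η₂ + η₃| ^ (3 - α)) : ℝ) : ℂ) := by
  set β := 3 - α with hβ
  have hb0 : 0 < β := by linarith
  have hb2 : β < 2 := by linarith
  have hI := fun s => (integral_cosKernel hb0 hb2 s).1
  have hV := fun s => (integral_cosKernel hb0 hb2 s).2
  simp only [weight_eq hα2, ← hβ]
  set f : ℝ → ℂ := fun ζ : ℝ =>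
        (1 - Complex.exp (Complex.I * η₁ * ζ)) * (1 - Complex.exp (Complex.I * η₂ * ζ))
          * (1 - Complex.exp (Complex.I * η₃ * ζ)) * ((|ζ| ^ (-1 - β) : ℝ) : ℂ) with hf
  have hint : Integrable f := by
    refine (((hI η₁).const_mul 2).add ((hI η₂).const_mul 2)).mono'
      (Measurable.aestronglyMeasurable (by fun_prop)) (ae_of_all _ fun ζ => ?_)
    have hw : 0 ≤ |ζ| ^ (-1 - β) := rpow_nonneg (abs_nonneg _) _
    simp only [hf, norm_mul, Complex.norm_real, norm_eq_abs, abs_of_nonneg hw, Pi.add_apply,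
      cosKernel]
    rw [← mul_assoc, ← mul_assoc, ← norm_one_sub_exp_sq, ← norm_one_sub_exp_sq, ← add_mul]
    refine mul_le_mul_of_nonneg_right ?_ hw
    have h3 := norm_one_sub_exp_le η₃ ζ
    set x := ‖1 - Complex.exp (Complex.I * η₁ * ζ)‖ with hx
    set y := ‖1 - Complex.exp (Complex.I * η₂ * ζ)‖ with hy
    have hxy : 0 ≤ x * y := by positivity
    nlinarith [sq_nonneg (x - y), mul_le_mul_of_nonneg_left h3 hxy]
  refine ⟨hint, ?_⟩
  -- the combination of kernels produced by expanding the product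
  set g : ℝ → ℝ := fun ζ => cosKernel β η₁ ζ + cosKernel β η₂ ζ + cosKernel β η₃ ζ
    + cosKernel β (η₁ + η₂ + η₃) ζ - cosKernel β (η₁ + η₂) ζ - cosKernel β (η₁ + η₃) ζ
    - cosKernel β (η₂ + η₃) ζ with hg
  have hpar : ∀ ζ, f ζ + f (-ζ) = ((2 * g ζ : ℝ) : ℂ) := by
    intro ζ
    have hE : ∀ a : ℝ, Complex.exp (Complex.I * a * ζ) + Complex.exp (-(Complex.I * a * ζ))
        = 2 * Complex.cos (a * ζ) := by
      intro a
      rw [Complex.two_cos]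
      ring_nf
    have e1 := hE η₁
    have e2 := hE η₂
    have e3 := hE η₃
    have e12 := hE (η₁ + η₂)
    have e13 := hE (η₁ + η₃)
    have e23 := hE (η₂ + η₃)
    have e123 := hE (η₁ + η₂ + η₃)
    simp only [Complex.ofReal_add, mul_add, add_mul, neg_add, Complex.exp_add]
      at e1 e2 e3 e12 e13 e23 e123
    simp only [hf, hg, cosKernel, abs_neg, Complex.ofReal_neg, mul_neg]
    push_cast
    simp only [add_mul]
    linear_combination ((|ζ| ^ (-1 - β) : ℝ) : ℂ) * (-e1 - e2 - e3 + e12 + e13 + e23 - e123)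
  have hgint : ∫ ζ, g ζ = π / (Gamma (1 + β) * sin (π * β / 2)) *
      (|η₁| ^ β + |η₂| ^ β + |η₃| ^ β + |η₁ + η₂ + η₃| ^ β
        - |η₁ + η₂| ^ β - |η₁ + η₃| ^ β - |η₂ + η₃| ^ β) := by
    have i1 := (hI η₁).add (hI η₂)
    have i2 := i1.add (hI η₃)
    have i3 := i2.add (hI (η₁ + η₂ + η₃))
    have i4 := i3.sub (hI (η₁ + η₂))
    have i5 := i4.sub (hI (η₁ + η₃))
    have e : g = cosKernel β η₁ + cosKernel β η₂ + cosKernel β η₃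
      + cosKernel β (η₁ + η₂ + η₃) - cosKernel β (η₁ + η₂) - cosKernel β (η₁ + η₃)
      - cosKernel β (η₂ + η₃) := rfl
    rw [e, integral_sub' i5 (hI _), integral_sub' i4 (hI _), integral_sub' i3 (hI _),
      integral_add' i2 (hI _), integral_add' i1 (hI _), integral_add' (hI _) (hI _)]
    simp only [hV]
    ring
  have hsum : 2 * ∫ ζ, f ζ = ((2 * ∫ ζ, g ζ : ℝ) : ℂ) := by
    rw [← integral_const_mul 2 g, ← integral_complex_ofReal, ← integral_congr_ae (ae_of_all _ hpar),
      integral_add hint hint.comp_neg, integral_neg_eq_self f]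
    ring
  have hfin : ∫ ζ, f ζ = ((∫ ζ, g ζ : ℝ) : ℂ) := by
    rw [Complex.ofReal_mul] at hsum
    exact mul_left_cancel₀ (by norm_num) hsum
  rw [hfin, hgint, hβ, cosKernel_const_eq hα1 hα2]
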